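/- Let θ ∈ (0, π), let n ≥ 1, and let λ₁, …, λ_n be real numbers; set θᵢ := arccot(λᵢ) = π/2 − arctan(λᵢ) ∈ (0, π). Then ∑_{i=1}^n θᵢ = θ if and only if both: (i) Re(∏_{i=1}^n (λᵢ + i)) − cot(θ)·Im(∏_{i=1}^n (λᵢ + i)) = 0, and (ii) for every proper subset K ⊊ {1,…,n}, Re(∏_{i∈K} (λᵢ + i)) − cot(θ)·Im(∏_{i∈K} (λᵢ + i)) > 0 (the empty product being 1). -/

import Mathlib

open Real

/-- The arccotangent with range `(0, π)`. -/
noncomputable def arccot (x : ℝ) : ℝ := π / 2 - Real.arctan x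


theorem aux_pos (x : ℝ) : 0 < arccot x := by
  unfold arccot; linarith [Real.arctan_lt_pi_div_two x]

theorem aux_lt (x : ℝ) : arccot x < π := by
  unfold arccot; linarith [Real.neg_pi_div_two_lt_arctan x]

theorem aux_one (x : ℝ) : ∃ R : ℝ, 0 < R ∧ x = R * Real.cos (arccot x) ∧
    1 = R * Real.sin (arccot x) := by
  have h : 0 < √(1 + x ^ 2) := Real.sqrt_pos.mpr (by positivity)
  refine ⟨√(1 + x ^ 2), h, ?_, ?_⟩
  · rw [arccot, Real.cos_pi_div_two_sub, Real.sin_arctan]; field_simp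
  · rw [arccot, Real.sin_pi_div_two_sub, Real.cos_arctan]; field_simp

theorem aux_prod {n : ℕ} (lam : Fin n → ℝ) (K : Finset (Fin n)) : ∃ R : ℝ, 0 < R ∧
    (∏ i ∈ K, ((lam i : ℂ) + Complex.I)).re = R * Real.cos (∑ i ∈ K, arccot (lam i)) ∧
    (∏ i ∈ K, ((lam i : ℂ) + Complex.I)).im = R * Real.sin (∑ i ∈ K, arccot (lam i)) := by
  induction K using Finset.induction_on with
  | empty => exact ⟨1, by simp⟩
  | insert a s ha ih =>
    obtain ⟨R, hR, h1, h2⟩ := ih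
    obtain ⟨r, hr, h3, h4⟩ := aux_one (lam a)
    refine ⟨r * R, mul_pos hr hR, ?_, ?_⟩
    · rw [Finset.prod_insert ha, Finset.sum_insert ha, Complex.mul_re, h1, h2, Real.cos_add]
      simp only [Complex.add_re, Complex.add_im, Complex.ofReal_re, Complex.ofReal_im,
        Complex.I_re, Complex.I_im, add_zero, zero_add]
      linear_combination (R * Real.cos (∑ i ∈ s, arccot (lam i))) * h3
        - (R * Real.sin (∑ i ∈ s, arccot (lam i))) * h4
    · rw [Finset.prod_insert ha, Finset.sum_insert ha, Complex.mul_im, h1, h2, Real.sin_add]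
      simp only [Complex.add_re, Complex.add_im, Complex.ofReal_re, Complex.ofReal_im,
        Complex.I_re, Complex.I_im, add_zero, zero_add]
      linear_combination (R * Real.sin (∑ i ∈ s, arccot (lam i))) * h3
        + (R * Real.cos (∑ i ∈ s, arccot (lam i))) * h4

theorem aux_key (θ : ℝ) (hθ : θ ∈ Set.Ioo 0 π) {n : ℕ} (lam : Fin n → ℝ)
    (K : Finset (Fin n)) : ∃ c : ℝ, 0 < c ∧
    (∏ i ∈ K, ((lam i : ℂ) + Complex.I)).re
      - (Real.cos θ / Real.sin θ) * (∏ i ∈ K, ((lam i : ℂ) + Complex.I)).im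
      = c * Real.sin (θ - ∑ i ∈ K, arccot (lam i)) := by
  obtain ⟨R, hR, h1, h2⟩ := aux_prod lam K
  have hs := Real.sin_pos_of_mem_Ioo hθ
  refine ⟨R / Real.sin θ, div_pos hR hs, ?_⟩
  rw [h1, h2, Real.sin_sub]
  field_simp

/-- For `θ ∈ (0, π)` and reals `λ₁, …, λ_n` (`n ≥ 1`) with
`θᵢ := arccot λᵢ ∈ (0, π)`, one has `∑ θᵢ = θ` iff both
(i) `Re (∏ (λᵢ + i)) − cot θ · Im (∏ (λᵢ + i)) = 0`, and
(ii) for every proper subset `K ⊊ {1,…,n}`,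
`Re (∏_{i ∈ K} (λᵢ + i)) − cot θ · Im (∏_{i ∈ K} (λᵢ + i)) > 0`
(the empty product being `1`). -/
theorem angle_eq_iff_dhym (θ : ℝ) (hθ : θ ∈ Set.Ioo 0 π) (n : ℕ) (hn : 1 ≤ n)
    (lam : Fin n → ℝ) :
    (∑ i, arccot (lam i)) = θ ↔
      ((∏ i, ((lam i : ℂ) + Complex.I)).re
          - (Real.cos θ / Real.sin θ) * (∏ i, ((lam i : ℂ) + Complex.I)).im = 0 ∧
        ∀ K : Finset (Fin n), K ≠ Finset.univ →
          0 < (∏ i ∈ K, ((lam i : ℂ) + Complex.I)).re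
                - (Real.cos θ / Real.sin θ) * (∏ i ∈ K, ((lam i : ℂ) + Complex.I)).im) := by
  obtain ⟨h0, hπ⟩ := hθ
  have hnn : ∀ K : Finset (Fin n), 0 ≤ ∑ i ∈ K, arccot (lam i) := fun K =>
    Finset.sum_nonneg fun i _ => (aux_pos _).le
  constructor
  · intro h
    constructor
    · obtain ⟨c, hc, e⟩ := aux_key θ ⟨h0, hπ⟩ lam Finset.univ
      rw [e, h]; simp
    · intro K hK
      obtain ⟨c, hc, e⟩ := aux_key θ ⟨h0, hπ⟩ lam K
      rw [e]
      have hlt : ∑ i ∈ K, arccot (lam i) < θ := by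
        rw [← h]
        obtain ⟨a, ha⟩ : ∃ a, a ∉ K := by
          by_contra hc
          push Not at hc
          exact hK (Finset.eq_univ_iff_forall.mpr hc)
        exact Finset.sum_lt_sum_of_subset (Finset.subset_univ K) (Finset.mem_univ a) ha
          (aux_pos _) (fun i _ _ => (aux_pos _).le)
      exact mul_pos hc (Real.sin_pos_of_pos_of_lt_pi (by linarith) (by linarith [hnn K]))
  · rintro ⟨hi, hii⟩
    have hlt : ∀ K : Finset (Fin n), K ≠ Finset.univ → ∑ i ∈ K, arccot (lam i) < θ := by
      intro K
      induction K using Finset.induction_on with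
      | empty => intro _; simpa using h0
      | insert a s ha ih =>
        intro hK
        have hs : s ≠ Finset.univ := fun h => ha (h ▸ Finset.mem_univ a)
        have h1 := ih hs
        have h2 := hii _ hK
        obtain ⟨c, hc, e⟩ := aux_key θ ⟨h0, hπ⟩ lam (insert a s)
        rw [e] at h2
        have h3 := pos_of_mul_pos_right h2 hc.le
        by_contra hcon
        push Not at hcon
        have h4 : -π ≤ θ - ∑ i ∈ insert a s, arccot (lam i) := by
          rw [Finset.sum_insert ha]; linarith [aux_lt (lam a)]
        have := Real.sin_nonpos_of_nonpos_of_neg_pi_le (by linarith) h4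
        linarith
    obtain ⟨c, hc, e⟩ := aux_key θ ⟨h0, hπ⟩ lam Finset.univ
    rw [e] at hi
    have h3 := (mul_eq_zero.mp hi).resolve_left hc.ne'
    let a : Fin n := ⟨0, hn⟩
    have h5 := hlt (Finset.univ.erase a) (fun h => by
      have := Finset.mem_univ a
      rw [← h] at this
      simp at this)
    have h6 := Finset.add_sum_erase Finset.univ (fun i => arccot (lam i)) (Finset.mem_univ a)
    have h7 := (Real.sin_eq_zero_iff_of_lt_of_lt (by linarith [aux_lt (lam a)])
      (by linarith [hnn Finset.univ])).mp h3
    linarith
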